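/- Let n ≥ 1, let f ∈ Q₀ⁿ, and suppose there exists a ∈ [e^{−n}, 1] such that a·‖f‖_∞·1_{B₂ⁿ} ≤ f pointwise (which holds when f is in John's position). Then for every integer k with 0 ≤ k ≤ n−1, W_{n−k}(f) ≤ W_{n−k−1}(f) · (n+k+1)/(k+1). -/

import Mathlib

open MeasureTheory

noncomputable section

/-- `ℝⁿ` with its Euclidean structure. -/
abbrev Eucl (n : ℕ) := EuclideanSpace ℝ (Fin n)

/-- `f : ℝⁿ → [0,∞)` is log-concave:
`f(tx+(1−t)y) ≥ f(x)^t · f(y)^(1−t)` for all `x, y` and `t ∈ (0,1)`. -/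
def IsLogConcave {n : ℕ} (f : Eucl n → ℝ) : Prop :=
  ∀ x y : Eucl n, ∀ t : ℝ, 0 < t → t < 1 →
    f x ^ t * f y ^ (1 - t) ≤ f (t • x + (1 - t) • y)

/-- The class `Q₀ⁿ`: nonnegative, log-concave, upper semicontinuous, integrable
functions with positive integral. -/
def MemQ0 {n : ℕ} (f : Eucl n → ℝ) : Prop :=
  (∀ x, 0 ≤ f x) ∧ IsLogConcave f ∧ UpperSemicontinuous f ∧
    Integrable f ∧ 0 < ∫ x, f x

/-- `‖f‖_∞ = sup f`. -/
def supNorm {n : ℕ} (f : Eucl n → ℝ) : ℝ := ⨆ x, f x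

/-- `‖f‖_p = (∫ f^p)^(1/p)`. -/
def lpNorm {n : ℕ} (p : ℝ) (f : Eucl n → ℝ) : ℝ := (∫ x, f x ^ p) ^ (1 / p)

/-- `‖P_H f‖_{L¹(H)} = ∫_H sup_{z ∈ H⊥} f(y+z) dλ_H(y)`, the `L¹(H)`-norm of the
projection of `f` onto the subspace `H` (with the Lebesgue measure on `H` induced
by the Euclidean structure). -/
def projL1 {n : ℕ} (f : Eucl n → ℝ) (H : Submodule ℝ (Eucl n)) : ℝ :=
  ∫ y : H, ⨆ z : Hᗮ, f ((y : Eucl n) + (z : Eucl n))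

/-- `‖S_H f‖_{L¹(H)} = ∫_H f dλ_H`, the integral of the section `f|_H`. -/
def sectL1 {n : ℕ} (f : Eucl n → ℝ) (H : Submodule ℝ (Eucl n)) : ℝ :=
  ∫ y : H, f (y : Eucl n)

/-- The orthogonal group `O(n)` acting on `ℝⁿ`. -/
abbrev OG (n : ℕ) := Matrix.orthogonalGroup (Fin n) ℝ

instance (n : ℕ) : MeasurableSpace (OG n) := borel _

/-- The volume `ω_d` of the Euclidean unit ball in `ℝ^d`. -/
def ballVol (d : ℕ) : ℝ := (volume (Metric.closedBall (0 : Eucl d) 1)).toReal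

/-- The coordinate subspace `H₀ᵏ = span(e₁, …, e_k)` of `ℝⁿ`. -/
def stdSubspace (n k : ℕ) : Submodule ℝ (Eucl n) :=
  Submodule.span ℝ {v | ∃ i : Fin n, (i : ℕ) < k ∧ v = EuclideanSpace.single i 1}

/-- The quermassintegral `W_j(f)` of a function `f : ℝⁿ → [0,∞)`, defined for
`0 ≤ j ≤ n-1` (writing `k = n - j`) by
`W_{n−k}(f) = (ω_n/ω_k) ∫_{O(n)} ∫_{H₀ᵏ} sup_{z ∈ (H₀ᵏ)⊥} f(g(y+z)) dλ_k(y) dν(g)`,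
where `ν` is the Haar probability measure on `O(n)`, together with the convention
`W_n(f) = ω_n · ‖f‖_∞`.  (For `j = 0` the formula gives `W_0(f) = ‖f‖₁`.) -/
def querm {n : ℕ} (ν : Measure (OG n)) (f : Eucl n → ℝ) (j : ℕ) : ℝ :=
  if j = n then ballVol n * supNorm f
  else (ballVol n / ballVol (n - j)) *
    ∫ g : OG n,
      (∫ y : stdSubspace n (n - j), ⨆ z : (stdSubspace n (n - j))ᗮ,
        f ((Matrix.toEuclideanLin (g : Matrix (Fin n) (Fin n) ℝ))
            ((y : Eucl n) + (z : Eucl n)))) ∂ν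


section
open scoped ENNReal

/-- quasi-concavity for `[0,∞]`-valued functions -/
def QC {E : Type*} [AddCommGroup E] [Module ℝ E] (G : E → ℝ≥0∞) : Prop :=
  ∀ x y : E, ∀ a b : ℝ, 0 ≤ a → 0 ≤ b → a + b = 1 → min (G x) (G y) ≤ G (a • x + b • y)

lemma QC.convex {E : Type*} [AddCommGroup E] [Module ℝ E] {G : E → ℝ≥0∞} (hG : QC G) (t : ℝ≥0∞) :
    Convex ℝ {x | t < G x} := by
  intro x hx y hy a b ha hb hab
  exact lt_of_lt_of_le (lt_min hx hy) (hG x y a b ha hb hab)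

lemma QC.aemeasurable {E : Type*} [NormedAddCommGroup E] [NormedSpace ℝ E] [MeasurableSpace E]
    [BorelSpace E] [FiniteDimensional ℝ E] (μ : Measure E) [μ.IsAddHaarMeasure]
    {G : E → ℝ≥0∞} (hG : QC G) : AEMeasurable G μ := by
  apply NullMeasurable.aemeasurable
  have : @Measurable (NullMeasurableSpace E μ) ℝ≥0∞ _ _ G := by
    apply measurable_of_Ioi
    intro t
    exact (hG.convex t).nullMeasurableSet μ
  exact fun s hs => this hs

lemma QC.comp {E F : Type*} [AddCommGroup E] [Module ℝ E] [AddCommGroup F] [Module ℝ F]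
    {G : F → ℝ≥0∞} (hG : QC G) (L : E →ₗ[ℝ] F) : QC (fun x => G (L x)) := by
  intro x y a b ha hb hab
  simpa using hG (L x) (L y) a b ha hb hab

/-- sup over a convex set of parameters entering linearly -/
lemma QC.iSup {E F Z : Type*} [AddCommGroup E] [Module ℝ E] [AddCommGroup F] [Module ℝ F]
    [AddCommGroup Z] [Module ℝ Z]
    {G : F → ℝ≥0∞} (hG : QC G) (L : E →ₗ[ℝ] F) (M : Z →ₗ[ℝ] F) (S : Set Z) (hS : Convex ℝ S) :
    QC (fun x => ⨆ z ∈ S, G (L x + M z)) := by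
  intro x y a b ha hb hab
  refine le_of_forall_lt fun t ht => ?_
  rw [lt_min_iff] at ht
  obtain ⟨h1, h2⟩ := ht
  simp only [lt_iSup_iff] at h1 h2 ⊢
  obtain ⟨z1, hz1, h1⟩ := h1
  obtain ⟨z2, hz2, h2⟩ := h2
  refine ⟨a • z1 + b • z2, hS hz1 hz2 ha hb hab, lt_of_lt_of_le (lt_min h1 h2) ?_⟩
  refine (hG _ _ a b ha hb hab).trans_eq ?_
  congr 1
  simp only [map_add, map_smul, smul_add]
  abel

/-- one-dimensional estimate -/
lemma oneD (φ : ℝ → ℝ≥0∞) (δ : ℝ) (hδ : 0 ≤ δ) (t0 : ℝ) :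
    (∫⁻ t, φ t) + ENNReal.ofReal (2 * δ) * φ t0 ≤ ∫⁻ t, ⨆ s ∈ Set.Icc (-δ) δ, φ (t + s) := by
  set ψ : ℝ → ℝ≥0∞ := fun t => ⨆ s ∈ Set.Icc (-δ) δ, φ (t + s) with hψ
  have hle : ∀ t s, |s| ≤ δ → φ (t + s) ≤ ψ t := by
    intro t s hs
    exact le_iSup₂_of_le s (abs_le.mp hs) le_rfl
  have h1 : ∫⁻ t in Set.Iio t0, φ t ≤ ∫⁻ t in Set.Iio (t0 - δ), ψ t := by
    have := (measurePreserving_add_right (volume : Measure ℝ) (-δ)).setLIntegral_comp_emb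
      (measurableEmbedding_addRight (-δ)) ψ (Set.Iio t0)
    have himg : (fun x => x + -δ) '' Set.Iio t0 = Set.Iio (t0 - δ) := by
      simp [sub_eq_add_neg]
    rw [himg] at this
    rw [← this]
    refine lintegral_mono fun t => ?_
    have := hle (t + -δ) δ (by rw [abs_of_nonneg hδ])
    simpa using this
  have h2 : ∫⁻ t in Set.Ici t0, φ t ≤ ∫⁻ t in Set.Ici (t0 + δ), ψ t := by
    have := (measurePreserving_add_right (volume : Measure ℝ) (δ)).setLIntegral_comp_emb
      (measurableEmbedding_addRight (δ)) ψ (Set.Ici t0)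
    have himg : (fun x => x + δ) '' Set.Ici t0 = Set.Ici (t0 + δ) := by
      simp
    rw [himg] at this
    rw [← this]
    refine lintegral_mono fun t => ?_
    have := hle (t + δ) (-δ) (by rw [abs_neg, abs_of_nonneg hδ])
    simpa using this
  have h3 : ENNReal.ofReal (2 * δ) * φ t0 ≤ ∫⁻ t in Set.Ico (t0 - δ) (t0 + δ), ψ t := by
    calc ENNReal.ofReal (2 * δ) * φ t0 = ∫⁻ t in Set.Ico (t0 - δ) (t0 + δ), φ t0 := by
          rw [setLIntegral_const, Real.volume_Ico, mul_comm]
          congr 2; ring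
      _ ≤ _ := by
          refine setLIntegral_mono' measurableSet_Ico fun t ht => ?_
          have := hle t (t0 - t) (by rw [abs_le]; constructor <;> linarith [ht.1, ht.2])
          simpa using this
  calc (∫⁻ t, φ t) + ENNReal.ofReal (2 * δ) * φ t0
      = (∫⁻ t in Set.Iio t0, φ t) + (∫⁻ t in Set.Ici t0, φ t) + ENNReal.ofReal (2 * δ) * φ t0 := by
        rw [← lintegral_add_compl φ (measurableSet_Iio (a := t0)), Set.compl_Iio]
    _ ≤ (∫⁻ t in Set.Iio (t0 - δ), ψ t) + (∫⁻ t in Set.Ici (t0 + δ), ψ t)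
        + ∫⁻ t in Set.Ico (t0 - δ) (t0 + δ), ψ t := by gcongr
    _ = ∫⁻ t, ψ t := by
        rw [← lintegral_add_compl (μ := volume) ψ (measurableSet_Iio (a := t0 - δ)), Set.compl_Iio, add_assoc]
        congr 1
        rw [add_comm (∫⁻ t in Set.Ici (t0 + δ), ψ t), ← lintegral_union measurableSet_Ici,
          Set.Ico_union_Ici_eq_Ici (by linarith)]
        rw [Set.disjoint_left]
        intro x hx hx'
        exact absurd hx.2 (not_lt.mpr hx')

def snocE {k : ℕ} (y : Eucl k) (t : ℝ) : Eucl (k + 1) :=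
  WithLp.toLp 2 (Fin.snoc (α := fun _ => ℝ) (WithLp.ofLp y) t)

lemma snocE_castSucc {k : ℕ} (y : Eucl k) (t : ℝ) (i : Fin k) : snocE y t i.castSucc = y i := by
  simp [snocE]

lemma snocE_last {k : ℕ} (y : Eucl k) (t : ℝ) : snocE y t (Fin.last k) = t := by
  simp [snocE]

/-- `snocE` as a linear map on the product -/
def snocL (k : ℕ) : Eucl k × ℝ →ₗ[ℝ] Eucl (k + 1) where
  toFun p := snocE p.1 p.2
  map_add' p q := by
    ext i
    refine Fin.lastCases ?_ (fun i => ?_) i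
    · simp [snocE]
    · simp [snocE]
  map_smul' c p := by
    ext i
    refine Fin.lastCases ?_ (fun i => ?_) i
    · simp [snocE]
    · simp [snocE]

lemma snoc_mp (k : ℕ) : MeasurePreserving (fun p : Eucl k × ℝ => snocE p.1 p.2) := by
  have h1 := (volume_preserving_piFinSuccAbove (fun _ : Fin (k + 1) => ℝ) (Fin.last k)).symm
  have h2 := PiLp.volume_preserving_toLp (Fin (k + 1))
  have h3 := PiLp.volume_preserving_ofLp (Fin k)
  have h4 : MeasurePreserving (Prod.map (WithLp.ofLp : Eucl k → (Fin k → ℝ)) (id : ℝ → ℝ)) :=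
    h3.prod (MeasurePreserving.id _)
  have h5 : MeasurePreserving (Prod.swap : (Fin k → ℝ) × ℝ → ℝ × (Fin k → ℝ)) :=
    Measure.measurePreserving_swap
  have := h2.comp (h1.comp (h5.comp h4))
  convert this using 1
  ext p i
  refine Fin.lastCases ?_ (fun i => ?_) i
  · simp [snocE, MeasurableEquiv.piFinSuccAbove]
  · simp [snocE, MeasurableEquiv.piFinSuccAbove]

lemma lintegral_snoc {k : ℕ} {G : Eucl (k + 1) → ℝ≥0∞} (hG : AEMeasurable G volume) :
    ∫⁻ x, G x = ∫⁻ y : Eucl k, ∫⁻ t : ℝ, G (snocE y t) := by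
  have h := (snoc_mp k)
  have h' : AEMeasurable (fun p : Eucl k × ℝ => G (snocE p.1 p.2)) volume :=
    hG.comp_quasiMeasurePreserving h.quasiMeasurePreserving
  rw [← lintegral_prod (fun p : Eucl k × ℝ => G (snocE p.1 p.2)) h']
  rw [← h.map_eq] at hG
  conv_lhs => rw [← h.map_eq]
  exact lintegral_map' hG h.aemeasurable

lemma snocE_add {k : ℕ} (y : Eucl k) (t s : ℝ) :
    snocE y (t + s) = snocE y t + s • EuclideanSpace.single (Fin.last k) 1 := by
  ext i
  refine Fin.lastCases ?_ (fun i => ?_) i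
  · simp [snocE]
  · simp [snocE, Fin.castSucc_ne_last]

/-- integral of the projection forgetting the last coordinate -/
def projLast {k : ℕ} (G : Eucl (k + 1) → ℝ≥0∞) : ℝ≥0∞ :=
  ∫⁻ y : Eucl k, ⨆ t : ℝ, G (snocE y t)

lemma QC.projLast_fun {k : ℕ} {G : Eucl (k + 1) → ℝ≥0∞} (hG : QC G) :
    QC (fun y : Eucl k => ⨆ t : ℝ, G (snocE y t)) := by
  have := hG.iSup ((snocL k).comp (LinearMap.inl ℝ _ _)) ((snocL k).comp (LinearMap.inr ℝ _ _))
    Set.univ convex_univ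
  convert this using 2 with y
  simp only [Set.mem_univ, iSup_pos, LinearMap.comp_apply, ← map_add]
  simp [snocL]

lemma projLast_mono {k : ℕ} {G G' : Eucl (k + 1) → ℝ≥0∞} (h : ∀ x, G x ≤ G' x) :
    projLast G ≤ projLast G' := by
  unfold projLast
  gcongr
  exact h _

/-- reflection sending `e_last` to `v/|v|` -/
def dirRefl {k : ℕ} (v : Eucl (k + 1)) : Eucl (k + 1) :=
  EuclideanSpace.single (Fin.last k) 1 - ‖v‖⁻¹ • v

lemma dirRefl_spec {k : ℕ} (v : Eucl (k + 1)) (hv : v ≠ 0) :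
    (Submodule.reflection (ℝ ∙ (dirRefl v))ᗮ) (‖v‖ • EuclideanSpace.single (Fin.last k) 1) = v := by
  rw [map_smul, dirRefl, Submodule.reflection_sub]
  · rw [smul_smul, mul_inv_cancel₀ (norm_ne_zero_iff.mpr hv), one_smul]
  · rw [norm_smul, norm_inv, norm_norm, inv_mul_cancel₀ (norm_ne_zero_iff.mpr hv)]
    simp

/-- integral of projection along direction `v` -/
def projDir {k : ℕ} (G : Eucl (k + 1) → ℝ≥0∞) (v : Eucl (k + 1)) : ℝ≥0∞ :=
  projLast (fun x => G ((Submodule.reflection (ℝ ∙ (dirRefl v))ᗮ) x))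

lemma step {k : ℕ} {G : Eucl (k + 1) → ℝ≥0∞} (hG : QC G) (v : Eucl (k + 1)) (δ : ℝ) (hδ : 0 ≤ δ) :
    (∫⁻ x, G x) + ENNReal.ofReal (2 * δ * ‖v‖) * projDir G v ≤
      ∫⁻ x, ⨆ s ∈ Set.Icc (-δ) δ, G (x + s • v) := by
  by_cases hv : v = 0
  · subst hv
    simp only [norm_zero, mul_zero, ENNReal.ofReal_zero, zero_mul, add_zero]
    refine lintegral_mono fun x => ?_
    exact le_iSup₂_of_le 0 ⟨by linarith, hδ⟩ (by simp)
  set h := Submodule.reflection (ℝ ∙ (dirRefl v))ᗮ with hh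
  have hspec : h (‖v‖ • EuclideanSpace.single (Fin.last k) 1) = v := dirRefl_spec v hv
  have hvpos : 0 < ‖v‖ := norm_pos_iff.mpr hv
  set G' : Eucl (k + 1) → ℝ≥0∞ := fun x => ⨆ s ∈ Set.Icc (-δ) δ, G (x + s • v) with hG'
  have hQ' : QC G' := by
    have := hG.iSup LinearMap.id (LinearMap.toSpanSingleton ℝ _ v) (Set.Icc (-δ) δ) (convex_Icc _ _)
    simpa [hG'] using this
  have hcomp : ∀ K : Eucl (k + 1) → ℝ≥0∞, ∫⁻ x, K x = ∫⁻ x, K (h x) := fun K =>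
    (h.measurePreserving.lintegral_comp_emb h.toHomeomorph.measurableEmbedding K).symm
  have hQh : QC (fun x => G (h x)) := hG.comp h.toLinearEquiv.toLinearMap
  have hQh' : QC (fun x => G' (h x)) := hQ'.comp h.toLinearEquiv.toLinearMap
  rw [hcomp G, hcomp G', lintegral_snoc (hQh.aemeasurable _), lintegral_snoc (hQh'.aemeasurable _)]
  unfold projDir projLast
  rw [← lintegral_const_mul' _ _ ENNReal.ofReal_ne_top, ← lintegral_add_right']
  swap
  · exact (hQh.projLast_fun.aemeasurable _).const_mul _
  refine lintegral_mono fun y => ?_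
  have key : ∀ t, G' (h (snocE y t)) =
      ⨆ s ∈ Set.Icc (-(δ * ‖v‖)) (δ * ‖v‖), G (h (snocE y (t + s))) := by
    intro t
    apply le_antisymm
    · refine iSup₂_le fun s hs => ?_
      refine le_iSup₂_of_le (s * ‖v‖) ⟨?_, ?_⟩ ?_
      · nlinarith [hs.1]
      · nlinarith [hs.2]
      · rw [snocE_add, map_add, mul_smul, map_smul h s, hspec]
    · refine iSup₂_le fun s hs => ?_
      refine le_iSup₂_of_le (s / ‖v‖) ⟨?_, ?_⟩ ?_
      · rw [le_div_iff₀ hvpos]; linarith [hs.1]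
      · rw [div_le_iff₀ hvpos]; linarith [hs.2]
      · rw [snocE_add, map_add]
        have : (s / ‖v‖) • v = h (s • EuclideanSpace.single (Fin.last k) 1) := by
          conv_lhs => rw [← hspec, LinearIsometryEquiv.norm_map, ← map_smul, smul_smul]
          congr 2
          rw [norm_smul]; simp [hvpos.ne']
        rw [this]
  simp_rw [key]
  rw [ENNReal.mul_iSup, ENNReal.add_iSup]
  refine iSup_le fun t0 => ?_
  have := oneD (fun t => G (h (snocE y t))) (δ * ‖v‖) (by positivity) t0
  rwa [← mul_assoc] at this

lemma steps {k : ℕ} {G : Eucl (k + 1) → ℝ≥0∞} (hG : QC G) (T : Finset (Eucl (k + 1)))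
    (w : Eucl (k + 1) → ℝ) (hw : ∀ v, 0 ≤ w v) :
    ∃ G' : Eucl (k + 1) → ℝ≥0∞, QC G' ∧ (∀ x, G x ≤ G' x) ∧
      (∀ x C, (∀ s : Eucl (k + 1) → ℝ, (∀ v ∈ T, |s v| ≤ w v) →
        G (x + ∑ v ∈ T, s v • v) ≤ C) → G' x ≤ C) ∧
      (∫⁻ x, G x) + ∑ v ∈ T, ENNReal.ofReal (2 * w v * ‖v‖) * projDir G v ≤ ∫⁻ x, G' x := by
  classical
  induction T using Finset.induction_on with
  | empty =>
    refine ⟨G, hG, fun _ => le_rfl, ?_, by simp⟩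
    intro x C h
    simpa using h 0 (by simp)
  | insert v T hvT ih =>
    obtain ⟨G1, hQ1, hle1, hC1, hI1⟩ := ih
    refine ⟨fun x => ⨆ s ∈ Set.Icc (-(w v)) (w v), G1 (x + s • v), ?_, ?_, ?_, ?_⟩
    · have := hQ1.iSup LinearMap.id (LinearMap.toSpanSingleton ℝ _ v) (Set.Icc (-(w v)) (w v))
        (convex_Icc _ _)
      simpa using this
    · intro x
      refine (hle1 x).trans (le_iSup₂_of_le 0 ⟨by linarith [hw v], hw v⟩ (by simp))
    · intro x C h
      refine iSup₂_le fun s hs => hC1 _ _ fun s' hs' => ?_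
      have := h (Function.update s' v s) (by
        intro u hu
        rw [Finset.mem_insert] at hu
        by_cases huv : u = v
        · subst huv; simpa using abs_le.mpr hs
        · rw [Function.update_of_ne huv]
          exact hs' u (hu.resolve_left huv))
      rw [Finset.sum_insert hvT, Function.update_self] at this
      have hsum : ∑ x ∈ T, Function.update s' v s x • x = ∑ x ∈ T, s' x • x := by
        refine Finset.sum_congr rfl fun u hu => ?_
        rw [Function.update_of_ne (fun h' => hvT (by rwa [h'] at hu))]
      rw [hsum] at this
      rwa [add_assoc]
    · refine le_trans ?_ (step hQ1 v (w v) (hw v))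
      rw [Finset.sum_insert hvT, add_left_comm, add_comm]
      refine add_le_add hI1 ?_
      gcongr
      exact projLast_mono fun x => hle1 _


/-- smearing estimate -/
def SM {E : Type*} [NormedAddCommGroup E] [NormedSpace ℝ E] (c : ℝ) (G : E → ℝ≥0∞) : Prop :=
  ∀ ε : ℝ, 0 < ε → ∀ x z : E, ‖x - z‖ ≤ ε →
    G z ≤ ENNReal.ofReal (Real.exp (c * ε)) * G ((1 + ε)⁻¹ • x)

lemma lintegral_scale {m : ℕ} (G : Eucl m → ℝ≥0∞) (r : ℝ) (hr : 0 < r) :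
    ∫⁻ x, G (r⁻¹ • x) = ENNReal.ofReal (r ^ m) * ∫⁻ x, G x := by
  have h := Measure.map_addHaar_smul (volume : Measure (Eucl m)) (inv_ne_zero hr.ne')
  have h2 : ∫⁻ x, G (r⁻¹ • x) = ∫⁻ x, G x ∂(Measure.map (fun x => r⁻¹ • x) volume) :=
    ((Homeomorph.smulOfNeZero (r⁻¹) (inv_ne_zero hr.ne')).measurableEmbedding.lintegral_map G).symm
  rw [h2]
  have h3 : Measure.map (fun x : Eucl m => r⁻¹ • x) volume = ENNReal.ofReal (r ^ m) • volume := by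
    rw [h]
    congr 2
    rw [finrank_euclideanSpace_fin, inv_pow, inv_inv, abs_of_pos (by positivity)]
  rw [h3, lintegral_smul_measure, smul_eq_mul]

lemma core {k : ℕ} {c : ℝ} (hc : 0 ≤ c) {G : Eucl (k + 1) → ℝ≥0∞} (hG : QC G) (hS : SM c G)
    (hI : ∫⁻ x, G x ≠ ∞) (T : Finset (Eucl (k + 1)))
    (w : Eucl (k + 1) → ℝ) (hw : ∀ v, 0 ≤ w v) (ρ : ℝ) (hρ : 0 < ρ)
    (hT : ∀ θ : Eucl (k + 1), ∑ v ∈ T, w v * |inner ℝ v θ| ≤ ρ * ‖θ‖) :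
    ∑ v ∈ T, ENNReal.ofReal (2 * w v * ‖v‖) * projDir G v ≤
      ENNReal.ofReal (ρ * (c + (k + 1))) * ∫⁻ x, G x := by
  set I := ∫⁻ x, G x with hIdef
  set S := ∑ v ∈ T, ENNReal.ofReal (2 * w v * ‖v‖) * projDir G v with hSdef
  set C := c + (k + 1) with hC
  have hCpos : 0 < C := by positivity
  have main : ∀ ε : ℝ, 0 < ε →
      I + ENNReal.ofReal ε * S ≤ ENNReal.ofReal (Real.exp (C * (ε * ρ))) * I := by
    intro ε hε
    have hτ : 0 < ε * ρ := by positivity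
    obtain ⟨G', -, -, hC', hI'⟩ := steps hG T (fun v => ε * w v) (fun v => by have := hw v; positivity)
    have hpt : ∀ x, G' x ≤ ENNReal.ofReal (Real.exp (c * (ε * ρ))) * G ((1 + ε * ρ)⁻¹ • x) := by
      intro x
      refine hC' x _ fun s hs => hS _ hτ _ _ ?_
      set p := ∑ v ∈ T, s v • v with hp
      have : x - (x + p) = -p := by abel
      rw [this, norm_neg]
      have h1 : ‖p‖ * ‖p‖ ≤ ε * ρ * ‖p‖ := by
        rw [← real_inner_self_eq_norm_mul_norm]
        conv_lhs => rw [hp]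
        rw [sum_inner]
        calc ∑ v ∈ T, inner ℝ (s v • v) p ≤ ∑ v ∈ T, ε * (w v * |inner ℝ v p|) := by
              refine Finset.sum_le_sum fun v hv => ?_
              rw [real_inner_smul_left, ← mul_assoc]
              refine (le_abs_self _).trans ?_
              rw [abs_mul]
              exact mul_le_mul_of_nonneg_right (hs v hv) (abs_nonneg _)
          _ = ε * ∑ v ∈ T, w v * |inner ℝ v p| := by rw [Finset.mul_sum]
          _ ≤ ε * (ρ * ‖p‖) := by gcongr; exact hT p
          _ = _ := by ring
      by_cases hp0 : ‖p‖ = 0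
      · rw [hp0]; positivity
      · exact le_of_mul_le_mul_right h1 (lt_of_le_of_ne (norm_nonneg _) (Ne.symm hp0))
    have hIntg : ∫⁻ x, G' x ≤ ENNReal.ofReal (Real.exp (C * (ε * ρ))) * I := by
      calc ∫⁻ x, G' x ≤ ∫⁻ x, ENNReal.ofReal (Real.exp (c * (ε * ρ))) * G ((1 + ε * ρ)⁻¹ • x) :=
            lintegral_mono hpt
        _ = ENNReal.ofReal (Real.exp (c * (ε * ρ))) *
              (ENNReal.ofReal ((1 + ε * ρ) ^ (k + 1)) * I) := by
            rw [lintegral_const_mul' _ _ ENNReal.ofReal_ne_top, lintegral_scale _ _ (by positivity)]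
        _ ≤ _ := by
            rw [← mul_assoc, ← ENNReal.ofReal_mul (by positivity)]
            gcongr
            rw [hC, add_mul, Real.exp_add]
            gcongr
            calc (1 + ε * ρ) ^ (k + 1) ≤ (Real.exp (ε * ρ)) ^ (k + 1) := by
                  gcongr
                  linarith [Real.add_one_le_exp (ε * ρ)]
              _ = _ := by
                rw [← Real.exp_nat_mul]; push_cast; ring_nf
    refine le_trans ?_ (hI'.trans hIntg)
    rw [hSdef, Finset.mul_sum]
    refine add_le_add le_rfl (Finset.sum_le_sum fun v _ => ?_)
    rw [← mul_assoc, ← ENNReal.ofReal_mul hε.le]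
    refine le_of_eq ?_
    congr 2
    ring
  have hSfin : S ≠ ∞ := by
    intro h
    have := main 1 one_pos
    rw [h] at this
    simp only [ENNReal.ofReal_one, one_mul, add_top, top_le_iff] at this
    exact ENNReal.mul_ne_top ENNReal.ofReal_ne_top hI this
  have mainR : ∀ ε : ℝ, 0 < ε → S.toReal ≤ C * ρ * Real.exp (C * (ε * ρ)) * I.toReal := by
    intro ε hε
    have h := ENNReal.toReal_mono (ENNReal.mul_ne_top ENNReal.ofReal_ne_top hI) (main ε hε)
    rw [ENNReal.toReal_add hI (ENNReal.mul_ne_top ENNReal.ofReal_ne_top hSfin),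
      ENNReal.toReal_mul, ENNReal.toReal_mul, ENNReal.toReal_ofReal hε.le,
      ENNReal.toReal_ofReal (Real.exp_pos _).le] at h
    set u := C * (ε * ρ) with hu
    have hI0 : 0 ≤ I.toReal := ENNReal.toReal_nonneg
    have he : Real.exp u - 1 ≤ u * Real.exp u := by
      have h1 := Real.add_one_le_exp (-u)
      have h2 : Real.exp u * Real.exp (-u) = 1 := by rw [← Real.exp_add]; simp
      nlinarith [Real.exp_pos u]
    have h2 : ε * S.toReal ≤ ε * (C * ρ * Real.exp u * I.toReal) := by
      have : (Real.exp u - 1) * I.toReal ≤ u * Real.exp u * I.toReal := by gcongr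
      calc ε * S.toReal ≤ (Real.exp u - 1) * I.toReal := by linarith
        _ ≤ u * Real.exp u * I.toReal := this
        _ = _ := by rw [hu]; ring
    exact le_of_mul_le_mul_left h2 hε
  have hlim : S.toReal ≤ C * ρ * I.toReal := by
    have ht : Filter.Tendsto (fun ε : ℝ => C * ρ * Real.exp (C * (ε * ρ)) * I.toReal)
        (nhdsWithin 0 (Set.Ioi 0)) (nhds (C * ρ * Real.exp (C * (0 * ρ)) * I.toReal)) := by
      apply Filter.Tendsto.mono_left _ nhdsWithin_le_nhds
      apply Continuous.tendsto
      fun_prop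
    have := ge_of_tendsto ht (by
      filter_upwards [self_mem_nhdsWithin] with ε hε using mainR ε hε)
    simpa using this
  rw [← ENNReal.ofReal_toReal hSfin, ← ENNReal.ofReal_toReal hI, ← ENNReal.ofReal_mul (by positivity)]
  exact ENNReal.ofReal_le_ofReal (by rw [mul_comm ρ]; exact hlim)


lemma ballVol_eq (d : ℕ) : ballVol d = √Real.pi ^ d / Real.Gamma ((d : ℝ) / 2 + 1) := by
  unfold ballVol
  rcases Nat.eq_zero_or_pos d with rfl | hd
  · have : Metric.closedBall (0 : Eucl 0) 1 = {0} := by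
      ext x; simp [Subsingleton.elim x 0]
    rw [this]
    have h0 : (volume ({0} : Set (Eucl 0))) = 1 := by
      have h := (PiLp.volume_preserving_toLp (Fin 0)).measure_preimage
        (s := ({0} : Set (Eucl 0))) (measurableSet_singleton _).nullMeasurableSet
      rw [← h]
      have : (WithLp.toLp 2 ⁻¹' ({0} : Set (Eucl 0))) = (Set.univ : Set (Fin 0 → ℝ)) := by
        ext x; simp [Subsingleton.elim x 0]
      rw [this]
      rw [volume_pi, Measure.pi_univ]
      simp
    rw [h0]; simp
  · haveI : Nonempty (Fin d) := ⟨⟨0, hd⟩⟩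
    rw [EuclideanSpace.volume_closedBall]
    simp only [ENNReal.ofReal_one, one_pow, one_mul, Fintype.card_fin]
    rw [ENNReal.toReal_ofReal]
    have : 0 < Real.Gamma ((d : ℝ) / 2 + 1) := Real.Gamma_pos_of_pos (by positivity)
    positivity

lemma ballVol_pos (d : ℕ) : 0 < ballVol d := by
  rw [ballVol_eq]
  have : 0 < Real.Gamma ((d : ℝ) / 2 + 1) := Real.Gamma_pos_of_pos (by positivity)
  have := Real.pi_pos
  positivity

/-- weighted position vector -/
def gX {m : ℕ} (x : Eucl m) : Eucl m := Real.exp (-‖x‖ ^ 2) • x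

lemma norm_gX {m : ℕ} (x : Eucl m) : ‖gX x‖ = ‖x‖ * Real.exp (-‖x‖ ^ 2) := by
  rw [gX, norm_smul, Real.norm_eq_abs, abs_of_pos (Real.exp_pos _), mul_comm]

lemma integrable_gX (k : ℕ) : Integrable (gX : Eucl (k + 1) → Eucl (k + 1)) := by
  have hc : Continuous (gX : Eucl (k + 1) → Eucl (k + 1)) := by
    unfold gX; fun_prop
  rw [← integrable_norm_iff hc.aestronglyMeasurable]
  simp_rw [norm_gX]
  rw [integrable_fun_norm_addHaar (volume : Measure (Eucl (k + 1))) (f := fun r => r * Real.exp (-r ^ 2))]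
  have := integrableOn_rpow_mul_exp_neg_mul_sq (b := 1) one_pos (s := (k : ℝ) + 1) (by
    have : (0 : ℝ) ≤ k := by positivity
    linarith)
  refine this.congr_fun ?_ measurableSet_Ioi
  intro y hy
  have hy : 0 < y := hy
  simp only [finrank_euclideanSpace_fin, Nat.add_sub_cancel, smul_eq_mul]
  rw [Real.rpow_add_one hy.ne', Real.rpow_natCast]
  ring_nf

lemma integral_norm_gX (k : ℕ) : ∫ x : Eucl (k + 1), ‖gX x‖ =
    (k + 1) * ballVol (k + 1) * (Real.Gamma ((k : ℝ) / 2 + 1) / 2) := by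
  simp_rw [norm_gX]
  rw [integral_fun_norm_addHaar (volume : Measure (Eucl (k + 1))) (f := fun r => r * Real.exp (-r ^ 2))]
  have h := integral_rpow_mul_exp_neg_rpow (p := 2) (q := (k : ℝ) + 1) two_pos (by
    have : (0 : ℝ) ≤ k := by positivity
    linarith)
  have h2 : ∫ y : ℝ in Set.Ioi 0, y ^ (Module.finrank ℝ (Eucl (k + 1)) - 1) • (y * Real.exp (-y ^ 2))
      = 1 / 2 * Real.Gamma (((k : ℝ) + 1 + 1) / 2) := by
    rw [← h]
    refine setIntegral_congr_fun measurableSet_Ioi ?_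
    intro y hy
    have hy : 0 < y := hy
    simp only [finrank_euclideanSpace_fin, Nat.add_sub_cancel, smul_eq_mul]
    rw [Real.rpow_add_one hy.ne', Real.rpow_natCast, Real.rpow_two]
    ring
  rw [h2]
  have h3 : (volume : Measure (Eucl (k + 1))).real (Metric.ball 0 1) = ballVol (k + 1) := by
    unfold ballVol
    rw [Measure.addHaar_closedBall_eq_addHaar_ball]
    rfl
  rw [h3, finrank_euclideanSpace_fin]
  simp only [nsmul_eq_mul, smul_eq_mul]
  push_cast
  have : ((k : ℝ) + 1 + 1) / 2 = (k : ℝ) / 2 + 1 := by ring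
  rw [this]; ring

lemma oneD_abs : ∫ t : ℝ, |t| * Real.exp (-t ^ 2) = 1 := by
  have h := integral_comp_abs (f := fun t => t * Real.exp (-t ^ 2))
  simp only [sq_abs] at h
  rw [h]
  have h := integral_rpow_mul_exp_neg_rpow (p := 2) (q := 1) two_pos (by norm_num)
  norm_num at h
  rw [h]; norm_num

lemma integral_last_gX (k : ℕ) : ∫ x : Eucl (k + 1), |gX x (Fin.last k)| = √Real.pi ^ k := by
  have h1 : ∀ x : Eucl (k + 1), |gX x (Fin.last k)| =
      ∏ i : Fin (k + 1), (if i = Fin.last k then fun t : ℝ => |t| * Real.exp (-t ^ 2)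
        else fun t => Real.exp (-t ^ 2)) (x i) := by
    intro x
    rw [Fin.prod_univ_castSucc]
    simp only [Fin.castSucc_ne_last, if_false, if_true]
    rw [← Real.exp_sum]
    simp only [gX, PiLp.smul_apply, smul_eq_mul, abs_mul, abs_of_pos (Real.exp_pos _)]
    rw [EuclideanSpace.norm_sq_eq, Fin.sum_univ_castSucc, neg_add, Real.exp_add]
    simp only [Real.norm_eq_abs, sq_abs, Finset.sum_neg_distrib]
    ring
  simp_rw [h1]
  have h2 := (PiLp.volume_preserving_toLp (Fin (k + 1))).integral_comp
    (MeasurableEquiv.toLp 2 (Fin (k + 1) → ℝ)).measurableEmbedding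
    (fun x : Eucl (k + 1) => ∏ i : Fin (k + 1), (if i = Fin.last k then fun t : ℝ => |t| * Real.exp (-t ^ 2)
        else fun t => Real.exp (-t ^ 2)) (x i))
  rw [← h2]
  rw [integral_fintype_prod_volume_eq_prod (fun i : Fin (k + 1) => (if i = Fin.last k then fun t : ℝ => |t| * Real.exp (-t ^ 2)
        else fun t => Real.exp (-t ^ 2)))]
  rw [Fin.prod_univ_castSucc]
  simp only [Fin.castSucc_ne_last, if_false, if_true]
  rw [oneD_abs]
  have := integral_gaussian 1
  simp at this
  simp [this]

lemma integral_inner_gX (k : ℕ) (θ : Eucl (k + 1)) :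
    ∫ x : Eucl (k + 1), |inner ℝ (gX x) θ| = √Real.pi ^ k * ‖θ‖ := by
  by_cases hθ : θ = 0
  · simp [hθ]
  set h := Submodule.reflection (ℝ ∙ (dirRefl θ))ᗮ with hh
  have hspec : h (‖θ‖ • EuclideanSpace.single (Fin.last k) 1) = θ := dirRefl_spec θ hθ
  have hg : ∀ x, gX (h x) = h (gX x) := by
    intro x; simp [gX]
  have := (h.measurePreserving.integral_comp h.toHomeomorph.measurableEmbedding
    (fun x => |inner ℝ (gX x) θ|)).symm
  rw [this, ← integral_last_gX, ← integral_mul_const]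
  congr 1
  ext x
  rw [hg]
  conv_lhs => rw [← hspec, LinearIsometryEquiv.inner_map_map]
  rw [real_inner_smul_right, abs_mul, abs_norm, mul_comm]
  congr 2
  simp [EuclideanSpace.inner_single_right]

lemma exists_directions (k : ℕ) (η : ℝ) (hη : 0 < η) :
    ∃ (T : Finset (Eucl (k + 1))) (w : Eucl (k + 1) → ℝ), (∀ v, 0 ≤ w v) ∧
      (∀ θ, ∑ v ∈ T, w v * |inner ℝ v θ| ≤ (√Real.pi ^ k + η) * ‖θ‖) ∧
      (k + 1) * ballVol (k + 1) * (Real.Gamma ((k : ℝ) / 2 + 1) / 2) - η ≤ ∑ v ∈ T, w v * ‖v‖ := by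
  have hX := integrable_gX k
  obtain ⟨φ, hφ, hφm⟩ := (memLp_one_iff_integrable.mpr hX).exists_simpleFunc_eLpNorm_sub_lt
    ENNReal.one_ne_top (ε := ENNReal.ofReal η) (by simpa using hη)
  have hφi : Integrable φ := memLp_one_iff_integrable.mp hφm
  have hi3 : Integrable (fun x => ‖gX x - φ x‖) := (hX.sub hφi).norm
  have hd : ∫ x, ‖gX x - φ x‖ ≤ η := by
    have h1 := (integral_norm_eq_lintegral_enorm (hX.sub hφi).aestronglyMeasurable)
    rw [eLpNorm_one_eq_lintegral_enorm] at hφ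
    have h2 : ∫ x, ‖gX x - φ x‖ = (∫⁻ x : Eucl (k + 1), ‖((gX : Eucl (k + 1) → Eucl (k + 1)) - ⇑φ) x‖ₑ).toReal := h1
    rw [h2]
    exact ENNReal.toReal_le_of_le_ofReal hη.le hφ.le
  have hsum : ∀ p : Eucl (k + 1) → ℝ, p 0 = 0 → Integrable (fun x => p (φ x)) →
      ∑ v ∈ φ.range, (volume : Measure (Eucl (k + 1))).real (φ ⁻¹' {v}) * p v = ∫ x, p (φ x) := by
    intro p hp hi
    have h1 := φ.map_integral p hφi hp
    have h2 := SimpleFunc.integral_eq_integral (φ.map p) (μ := volume) (by simpa [Function.comp_def] using hi)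
    simp only [smul_eq_mul] at h1
    rw [← h1, h2]
    simp
  refine ⟨φ.range, fun v => (volume : Measure (Eucl (k + 1))).real (φ ⁻¹' {v}),
    fun v => measureReal_nonneg, ?_, ?_⟩
  · intro θ
    have hi1 : Integrable (fun x => |inner ℝ (φ x) θ|) := (hφi.inner_const θ).abs
    have hi2 : Integrable (fun x => |inner ℝ (gX x) θ|) := (hX.inner_const θ).abs
    rw [hsum (fun v => |inner ℝ v θ|) (by simp) hi1]
    calc ∫ x, |inner ℝ (φ x) θ| ≤ ∫ x, (|inner ℝ (gX x) θ| + ‖gX x - φ x‖ * ‖θ‖) := by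
          refine integral_mono hi1 (hi2.add (hi3.mul_const _)) fun x => ?_
          have h1 : inner ℝ (φ x) θ = inner ℝ (gX x) θ - inner ℝ (gX x - φ x) θ := by
            rw [inner_sub_left]; ring
          have h2 := abs_real_inner_le_norm (gX x - φ x) θ
          have h3 := abs_sub (inner ℝ (gX x) θ) (inner ℝ (gX x - φ x) θ)
          simp only
          rw [h1]
          linarith
      _ = √Real.pi ^ k * ‖θ‖ + (∫ x, ‖gX x - φ x‖) * ‖θ‖ := by
          rw [integral_add hi2 (hi3.mul_const _), integral_inner_gX,
            integral_mul_const]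
      _ ≤ _ := by
          rw [add_mul]; gcongr
  · rw [hsum (fun v => ‖v‖) (by simp) hφi.norm, ← integral_norm_gX]
    have : ∫ x : Eucl (k + 1), ‖gX x‖ ≤ ∫ x, (‖φ x‖ + ‖gX x - φ x‖) := by
      refine integral_mono hX.norm (hφi.norm.add hi3) fun x => ?_
      simp only
      have := norm_add_le (φ x) (gX x - φ x)
      simpa using this
    rw [integral_add hφi.norm hi3] at this
    linarith


lemma MemQ0.bddAbove {n : ℕ} {f : Eucl n → ℝ} (hf : MemQ0 f) : BddAbove (Set.range f) := by
  obtain ⟨h0, hlc, husc, hIntg, hpos⟩ := hf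
  -- a level set with nonempty interior
  have hsupp := (integral_pos_iff_support_of_nonneg h0 hIntg).mp hpos
  have hcov : Function.support f ⊆ ⋃ j : ℕ, {x | (1 / ((j : ℝ) + 1)) < f x} := by
    intro x hx
    have : 0 < f x := lt_of_le_of_ne (h0 x) (Ne.symm hx)
    obtain ⟨j, hj⟩ := exists_nat_one_div_lt this
    exact Set.mem_iUnion.mpr ⟨j, hj⟩
  have hex : ∃ j : ℕ, volume {x | (1 / ((j : ℝ) + 1)) < f x} ≠ 0 := by
    by_contra hcon
    push Not at hcon
    have : volume (⋃ j : ℕ, {x | (1 / ((j : ℝ) + 1)) < f x}) = 0 := measure_iUnion_null hcon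
    exact hsupp.ne' (measure_mono_null hcov this)
  obtain ⟨j, hj⟩ := hex
  set t : ℝ := 1 / ((j : ℝ) + 1) with ht
  have htpos : 0 < t := by positivity
  have hconv : Convex ℝ {x | t < f x} := by
    rw [convex_iff_forall_pos]
    intro x hx y hy a b ha hb hab
    have h1 := hlc x y a ha (by linarith)
    have hb' : 1 - a = b := by linarith
    rw [hb'] at h1
    refine lt_of_lt_of_le ?_ h1
    have : t = t ^ a * t ^ b := by rw [← Real.rpow_add htpos, hab, Real.rpow_one]
    rw [this]
    exact mul_lt_mul'' (Real.rpow_lt_rpow htpos.le hx ha) (Real.rpow_lt_rpow htpos.le hy hb)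
      (by positivity) (by positivity)
  have hne : (interior {x | t < f x}).Nonempty := by
    rw [Set.nonempty_iff_ne_empty]
    intro he
    apply hj
    have h1 := hconv.addHaar_frontier volume
    refine measure_mono_null ?_ h1
    intro x hx
    rw [frontier, he]
    simpa using subset_closure hx
  obtain ⟨x0, hx0⟩ := hne
  obtain ⟨r, hr, hball⟩ := Metric.mem_nhds_iff.mp (mem_interior_iff_mem_nhds.mp hx0)
  set V := (volume (Metric.ball (0 : Eucl n) (r / 2))).toReal with hV
  have hVpos : 0 < V := ENNReal.toReal_pos (Metric.measure_ball_pos volume _ (by positivity)).ne'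
    measure_ball_lt_top.ne
  have key : ∀ x, √(f x) * √t * V ≤ ∫ y, f y := by
    intro x
    set c : Eucl n := (1 / 2 : ℝ) • x + (1 / 2 : ℝ) • x0 with hc
    have hVc : V = volume.real (Metric.ball c (r / 2)) := by
      rw [hV, Measure.real, Measure.addHaar_ball_center volume c]
    have hlow : ∀ y ∈ Metric.ball c (r / 2), √(f x) * √t ≤ f y := by
      intro y hy
      set b : Eucl n := (2 : ℝ) • y - x with hb
      have hbb : b ∈ Metric.ball x0 r := by
        rw [Metric.mem_ball, dist_eq_norm] at hy ⊢
        have : b - x0 = (2 : ℝ) • (y - c) := by rw [hb, hc]; module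
        rw [this, norm_smul, Real.norm_ofNat]; linarith
      have h1 := hlc x b (1 / 2) (by norm_num) (by norm_num)
      have h2 : (1 / 2 : ℝ) • x + (1 - 1 / 2 : ℝ) • b = y := by rw [hb]; module
      rw [h2] at h1
      have h3 : (1 - 1 / 2 : ℝ) = 1 / 2 := by norm_num
      rw [h3, ← Real.sqrt_eq_rpow, ← Real.sqrt_eq_rpow] at h1
      have h4 : t < f b := hball hbb
      have h5 : √t ≤ √(f b) := Real.sqrt_le_sqrt h4.le
      refine le_trans ?_ h1
      gcongr
    calc √(f x) * √t * V = ∫ y in Metric.ball c (r / 2), √(f x) * √t := by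
          rw [setIntegral_const, smul_eq_mul, hVc, mul_comm]
      _ ≤ ∫ y in Metric.ball c (r / 2), f y :=
          setIntegral_mono_on (integrableOn_const measure_ball_lt_top.ne) hIntg.integrableOn measurableSet_ball hlow
      _ ≤ ∫ y, f y := setIntegral_le_integral hIntg (Filter.Eventually.of_forall h0)
  refine ⟨((∫ y, f y) / (√t * V)) ^ 2, ?_⟩
  rintro _ ⟨x, rfl⟩
  have htt : 0 < √t := Real.sqrt_pos.mpr htpos
  have h1 : √(f x) ≤ (∫ y, f y) / (√t * V) := by
    rw [le_div_iff₀ (by positivity)]; linarith [key x]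
  calc f x = √(f x) ^ 2 := (Real.sq_sqrt (h0 x)).symm
    _ ≤ _ := by gcongr

lemma MemQ0.le_sup {n : ℕ} {f : Eucl n → ℝ} (hf : MemQ0 f) (x : Eucl n) : f x ≤ supNorm f :=
  le_ciSup hf.bddAbove x

lemma MemQ0.sup_pos {n : ℕ} {f : Eucl n → ℝ} (hf : MemQ0 f) : 0 < supNorm f := by
  by_contra hcon
  push Not at hcon
  have h : f = 0 := by
    ext x; exact le_antisymm ((hf.le_sup x).trans hcon) (hf.1 x)
  have := hf.2.2.2.2
  rw [h] at this
  simp at this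

lemma MemQ0.qc {n : ℕ} {f : Eucl n → ℝ} (hf : MemQ0 f) : QC (fun x => ENNReal.ofReal (f x)) := by
  intro x y a b ha hb hab
  rcases ha.eq_or_lt with rfl | ha
  · have : b = 1 := by linarith
    subst this; simp
  rcases hb.eq_or_lt with rfl | hb
  · have : a = 1 := by linarith
    subst this; simp
  rw [← ENNReal.ofReal_min]
  apply ENNReal.ofReal_le_ofReal
  have h1 := hf.2.1 x y a ha (by linarith)
  have hb' : 1 - a = b := by linarith
  rw [hb'] at h1
  refine le_trans ?_ h1
  have hm : 0 ≤ min (f x) (f y) := le_min (hf.1 x) (hf.1 y)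
  calc min (f x) (f y) = min (f x) (f y) ^ a * min (f x) (f y) ^ b := by
        rw [← Real.rpow_add' hm (by rw [hab]; norm_num), hab, Real.rpow_one]
    _ ≤ _ := by
        gcongr
        · exact Real.rpow_nonneg (hf.1 x) _
        · exact min_le_left _ _
        · exact min_le_right _ _

lemma MemQ0.sm {n : ℕ} {f : Eucl n → ℝ} (hf : MemQ0 f)
    (hB : ∀ b : Eucl n, ‖b‖ ≤ 1 → Real.exp (-(n : ℝ)) * supNorm f ≤ f b) :
    SM (n : ℝ) (fun x => ENNReal.ofReal (f x)) := by
  intro ε hε x z hxz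
  rw [← ENNReal.ofReal_mul (Real.exp_pos _).le]
  apply ENNReal.ofReal_le_ofReal
  rcases (hf.1 z).eq_or_lt with h0 | hz
  · rw [← h0]; exact mul_nonneg (Real.exp_pos _).le (hf.1 _)
  set b : Eucl n := ε⁻¹ • (x - z) with hb
  have hbn : ‖b‖ ≤ 1 := by
    rw [hb, norm_smul, norm_inv, Real.norm_of_nonneg hε.le, inv_mul_le_iff₀ hε]; simpa using hxz
  have h1 := hB b hbn
  set t : ℝ := (1 + ε)⁻¹ with ht
  have ht0 : 0 < t := by positivity
  have ht1 : t < 1 := inv_lt_one_of_one_lt₀ (by linarith)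
  have h2 := hf.2.1 z b t ht0 ht1
  have ht2 : 1 - t = t * ε := by rw [ht]; field_simp; ring
  have h3 : t • z + (1 - t) • b = t • x := by
    rw [ht2, hb, smul_smul, mul_assoc, mul_inv_cancel₀ hε.ne']; module
  rw [h3] at h2
  have hM := hf.le_sup z
  have h4 : Real.exp (-(n : ℝ)) * f z ≤ f b := le_trans (by gcongr) h1
  have h5 : f z * Real.exp (-(n : ℝ) * (1 - t)) ≤ f z ^ t * f b ^ (1 - t) := by
    calc f z * Real.exp (-(n : ℝ) * (1 - t)) = f z ^ t * (Real.exp (-(n : ℝ)) * f z) ^ (1 - t) := by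
          rw [Real.mul_rpow (Real.exp_pos _).le hz.le, ← Real.exp_mul, mul_left_comm,
            ← Real.rpow_add hz]
          simp [mul_comm]
      _ ≤ _ := by
          gcongr
  have h6 : f z ≤ Real.exp ((n : ℝ) * (1 - t)) * f (t • x) := by
    have := h5.trans h2
    calc f z = Real.exp ((n : ℝ) * (1 - t)) * (f z * Real.exp (-(n : ℝ) * (1 - t))) := by
          rw [mul_left_comm, ← Real.exp_add]; simp
      _ ≤ _ := by gcongr
  refine h6.trans ?_
  have : 0 ≤ f (t • x) := hf.1 _
  gcongr
  rw [ht2]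
  nlinarith


/-- extension by zero -/
def iotaL {m n : ℕ} (h : m ≤ n) : Eucl m →ₗᵢ[ℝ] Eucl n where
  toFun y := WithLp.toLp 2 (fun i : Fin n => if hi : (i : ℕ) < m then y ⟨i, hi⟩ else 0)
  map_add' x y := by
    ext i
    by_cases hi : (i : ℕ) < m <;> simp [hi]
  map_smul' c x := by
    ext i
    by_cases hi : (i : ℕ) < m <;> simp [hi]
  norm_map' x := by
    simp only [LinearMap.coe_mk, AddHom.coe_mk, EuclideanSpace.norm_eq]
    congr 1
    obtain ⟨d, rfl⟩ := Nat.exists_eq_add_of_le h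
    rw [Fin.sum_univ_add]
    simp

lemma iotaL_apply {m n : ℕ} (h : m ≤ n) (y : Eucl m) (i : Fin n) :
    iotaL h y i = if hi : (i : ℕ) < m then y ⟨i, hi⟩ else 0 := rfl

lemma mem_std_orth {n m : ℕ} (z : Eucl n) :
    z ∈ (stdSubspace n m)ᗮ ↔ ∀ i : Fin n, (i : ℕ) < m → z i = 0 := by
  constructor
  · intro hz i hi
    have := (Submodule.mem_orthogonal _ _).mp hz (EuclideanSpace.single i 1)
      (Submodule.subset_span ⟨i, hi, rfl⟩)
    rw [EuclideanSpace.inner_single_left] at this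
    simpa using this
  · intro hz
    rw [stdSubspace, Submodule.mem_orthogonal]
    intro u hu
    induction hu using Submodule.span_induction with
    | mem x hx =>
      obtain ⟨i, hi, rfl⟩ := hx
      rw [EuclideanSpace.inner_single_left, hz i hi, mul_zero]
    | zero => simp
    | add x y _ _ hx hy => rw [inner_add_left, hx, hy, add_zero]
    | smul a x _ hx => rw [inner_smul_left, hx, mul_zero]

lemma iotaL_mem {m n : ℕ} (h : m ≤ n) (y : Eucl m) : iotaL h y ∈ stdSubspace n m := by
  have : iotaL h y = ∑ i : Fin n, (iotaL h y i) • EuclideanSpace.single i (1 : ℝ) := by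
    ext j
    simp [Finset.sum_apply, Pi.single_apply]
  rw [this]
  refine Submodule.sum_mem _ fun i _ => ?_
  by_cases hi : (i : ℕ) < m
  · exact Submodule.smul_mem _ _ (Submodule.subset_span ⟨i, hi, rfl⟩)
  · rw [iotaL_apply, dif_neg hi, zero_smul]; exact Submodule.zero_mem _

lemma mem_std {m n : ℕ} (h : m ≤ n) {x : Eucl n} (hx : x ∈ stdSubspace n m) :
    ∃ y : Eucl m, iotaL h y = x := by
  change x ∈ LinearMap.range (iotaL h).toLinearMap
  refine (Submodule.span_le.mpr ?_) hx
  rintro _ ⟨i, hi, rfl⟩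
  refine ⟨EuclideanSpace.single ⟨i, hi⟩ 1, ?_⟩
  ext j
  simp only [LinearIsometry.coe_toLinearMap, iotaL_apply]
  by_cases hj : (j : ℕ) < m
  · simp [hj, Pi.single_apply, Fin.ext_iff]
  · have : j ≠ i := fun e => hj (e ▸ hi)
    simp [hj, this]

/-- `ℝ^m` is isometric to the coordinate subspace -/
def stdEquiv {m n : ℕ} (h : m ≤ n) : Eucl m ≃ₗᵢ[ℝ] stdSubspace n m :=
  LinearIsometryEquiv.ofSurjective
    { toFun := fun y => ⟨iotaL h y, iotaL_mem h y⟩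
      map_add' := fun x y => by ext1; simp
      map_smul' := fun c x => by ext1; simp
      norm_map' := fun x => LinearIsometry.norm_map (iotaL h) x }
    (by
      rintro ⟨x, hx⟩
      obtain ⟨y, hy⟩ := mem_std h hx
      exact ⟨y, Subtype.ext hy⟩)

lemma stdEquiv_coe {m n : ℕ} (h : m ≤ n) (y : Eucl m) : ((stdEquiv h y : stdSubspace n m) : Eucl n) = iotaL h y := rfl

/-- projection of a function to `ℝ^m` -/
def PF {m n : ℕ} (h : m ≤ n) (F : Eucl n → ℝ≥0∞) (y : Eucl m) : ℝ≥0∞ :=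
  ⨆ z : (stdSubspace n m)ᗮ, F (iotaL h y + z)

lemma PF_qc {m n : ℕ} (h : m ≤ n) {F : Eucl n → ℝ≥0∞} (hF : QC F) : QC (PF h F) := by
  have := hF.iSup (iotaL h).toLinearMap (Submodule.subtype (stdSubspace n m)ᗮ) Set.univ convex_univ
  convert this using 2 with y
  simp [PF]

lemma PF_sm {m n : ℕ} (h : m ≤ n) {c : ℝ} {F : Eucl n → ℝ≥0∞} (hF : SM c F) : SM c (PF h F) := by
  intro ε hε x z hxz
  refine iSup_le fun ζ => ?_
  refine (hF ε hε (iotaL h x + ζ) (iotaL h z + ζ) ?_).trans ?_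
  · rw [add_sub_add_right_eq_sub, ← map_sub, LinearIsometry.norm_map]; exact hxz
  · gcongr
    refine le_iSup_of_le ((1 + ε)⁻¹ • ζ) ?_
    simp

lemma PF_last {k n : ℕ} (h : k + 1 ≤ n) (F : Eucl n → ℝ≥0∞) (y : Eucl k) :
    PF (Nat.le_of_succ_le h) F y = ⨆ t : ℝ, PF h F (snocE y t) := by
  apply le_antisymm
  · refine iSup_le fun z => ?_
    have hz := (mem_std_orth (z : Eucl n)).mp z.2
    set t : ℝ := (z : Eucl n) ⟨k, h⟩ with ht
    have hz' : (z : Eucl n) - t • EuclideanSpace.single ⟨k, h⟩ 1 ∈ (stdSubspace n (k + 1))ᗮ := by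
      rw [mem_std_orth]
      intro i hi
      rcases Nat.lt_succ_iff_lt_or_eq.mp hi with h1 | h1
      · have : i ≠ ⟨k, h⟩ := fun e => by rw [e] at h1; simp at h1
        simp [hz i h1, this]
      · have : i = ⟨k, h⟩ := Fin.ext h1
        subst this
        simp [ht]
    refine le_iSup_of_le t (le_iSup_of_le ⟨_, hz'⟩ (le_of_eq ?_))
    congr 1
    ext i
    simp only [PiLp.add_apply, PiLp.sub_apply, PiLp.smul_apply, iotaL_apply]
    by_cases h1 : (i : ℕ) < k
    · have h2 : (i : ℕ) < k + 1 := by omega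
      have h3 : i ≠ ⟨k, h⟩ := fun e => by rw [e] at h1; simp at h1
      have h4 := snocE_castSucc y t ⟨i, h1⟩
      simp only [Fin.castSucc_mk] at h4
      simp [h1, h2, h3, h4]
    · by_cases h2 : (i : ℕ) = k
      · have h3 : i = ⟨k, h⟩ := Fin.ext h2
        subst h3
        have h4 := snocE_last y t
        simp only [Fin.last] at h4
        simp [h4, ← ht]
      · have h3 : ¬ (i : ℕ) < k + 1 := by omega
        have h4 : i ≠ ⟨k, h⟩ := fun e => h2 (by rw [e])
        simp [h1, h3, h4]
  · refine iSup_le fun t => iSup_le fun z => ?_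
    have hz := (mem_std_orth (z : Eucl n)).mp z.2
    have hz' : (z : Eucl n) + t • EuclideanSpace.single ⟨k, h⟩ 1 ∈ (stdSubspace n k)ᗮ := by
      rw [mem_std_orth]
      intro i hi
      have : i ≠ ⟨k, h⟩ := fun e => by rw [e] at hi; simp at hi
      simp [hz i (by omega), this]
    refine le_iSup_of_le ⟨_, hz'⟩ (le_of_eq ?_)
    congr 1
    ext i
    simp only [PiLp.add_apply, PiLp.smul_apply, iotaL_apply]
    by_cases h1 : (i : ℕ) < k
    · have h2 : (i : ℕ) < k + 1 := by omega
      have h3 : i ≠ ⟨k, h⟩ := fun e => by rw [e] at h1; simp at h1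
      have h4 := snocE_castSucc y t ⟨i, h1⟩
      simp only [Fin.castSucc_mk] at h4
      simp [h1, h2, h3, h4]
    · by_cases h2 : (i : ℕ) = k
      · have h3 : i = ⟨k, h⟩ := Fin.ext h2
        subst h3
        have h4 := snocE_last y t
        simp only [Fin.last] at h4
        simp [h4, add_comm]
      · have h3 : ¬ (i : ℕ) < k + 1 := by omega
        have h4 : i ≠ ⟨k, h⟩ := fun e => h2 (by rw [e])
        simp [h1, h3, h4]

lemma PF_lintegral_last {k n : ℕ} (h : k + 1 ≤ n) (F : Eucl n → ℝ≥0∞) :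
    ∫⁻ y, PF (Nat.le_of_succ_le h) F y = projLast (PF h F) := by
  unfold projLast
  exact lintegral_congr fun y => PF_last h F y

lemma PF_self {n : ℕ} (F : Eucl n → ℝ≥0∞) (y : Eucl n) : PF le_rfl F y = F y := by
  have h1 : iotaL (le_refl n) y = y := by
    ext i; simp [iotaL_apply]
  apply le_antisymm
  · refine iSup_le fun z => ?_
    have : (z : Eucl n) = 0 := by
      ext i; exact (mem_std_orth (z : Eucl n)).mp z.2 i i.2
    rw [this, h1, add_zero]
  · refine le_iSup_of_le 0 ?_
    rw [h1]; simp

lemma refl_formula {m : ℕ} (w x : Eucl m) :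
    Submodule.reflection (ℝ ∙ w)ᗮ x = x - (2 * (inner ℝ w x / ‖w‖ ^ 2)) • w := by
  rw [Submodule.reflection_orthogonal_apply, Submodule.reflection_singleton_apply]
  simp only [RCLike.ofReal_real_eq_id, id_eq]
  rw [neg_sub, two_smul, two_mul, add_smul]

lemma refl_iota {m n : ℕ} (h : m ≤ n) (w y : Eucl m) (z : Eucl n) (hz : z ∈ (stdSubspace n m)ᗮ) :
    Submodule.reflection (ℝ ∙ (iotaL h w))ᗮ (iotaL h y + z) =
      iotaL h (Submodule.reflection (ℝ ∙ w)ᗮ y) + z := by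
  have h0 : inner ℝ (iotaL h w) z = 0 := (Submodule.mem_orthogonal _ _).mp hz _ (iotaL_mem h w)
  rw [refl_formula, refl_formula, inner_add_right, h0, LinearIsometry.inner_map_map,
    LinearIsometry.norm_map, map_sub, map_smul, add_zero]
  abel

lemma PF_refl {m n : ℕ} (h : m ≤ n) (F : Eucl n → ℝ≥0∞) (w y : Eucl m) :
    PF h (fun x => F (Submodule.reflection (ℝ ∙ (iotaL h w))ᗮ x)) y =
      PF h F (Submodule.reflection (ℝ ∙ w)ᗮ y) := by
  unfold PF
  refine iSup_congr fun z => ?_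
  exact congrArg F (refl_iota h w y z z.2)

lemma PF_projDir {k n : ℕ} (h : k + 1 ≤ n) (F : Eucl n → ℝ≥0∞) (v : Eucl (k + 1)) :
    ∫⁻ y, PF (Nat.le_of_succ_le h)
      (fun x => F (Submodule.reflection (ℝ ∙ (iotaL h (dirRefl v)))ᗮ x)) y = projDir (PF h F) v := by
  rw [PF_lintegral_last, projDir]
  congr 1
  ext x
  rw [PF_refl]

lemma lintegral_std {m n : ℕ} (h : m ≤ n) (F : stdSubspace n m → ℝ≥0∞) :
    ∫⁻ y, F y = ∫⁻ y : Eucl m, F (stdEquiv h y) :=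
  ((stdEquiv h).measurePreserving.lintegral_comp_emb
    (stdEquiv h).toHomeomorph.measurableEmbedding F).symm


instance instBorelOG (n : ℕ) : BorelSpace (OG n) := ⟨rfl⟩

instance instSecOG (n : ℕ) : SecondCountableTopology (OG n) := by
  have : SecondCountableTopology (Matrix (Fin n) (Fin n) ℝ) :=
    inferInstanceAs (SecondCountableTopology (Fin n → Fin n → ℝ))
  exact TopologicalSpace.Subtype.secondCountableTopology _

lemma og_right_inv {n : ℕ} (ν : Measure (OG n)) [IsProbabilityMeasure ν] [ν.IsMulLeftInvariant] :
    ν.IsMulRightInvariant := by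
  have hinv : ν.inv = ν := by
    refine Measure.ext_of_lintegral _ fun φ hφ => ?_
    have h1 : ∫⁻ x, φ x ∂ν.inv = ∫⁻ x, φ x⁻¹ ∂ν := by
      rw [Measure.inv, lintegral_map hφ measurable_inv]
    rw [h1]
    symm
    calc ∫⁻ x, φ x ∂ν = ∫⁻ x, ∫⁻ y, φ (x⁻¹ * y) ∂ν ∂ν := by
          simp_rw [lintegral_mul_left_eq_self]
          simp
      _ = ∫⁻ y, ∫⁻ x, φ (x⁻¹ * y) ∂ν ∂ν := by
          apply lintegral_lintegral_swap
          exact (hφ.comp ((measurable_fst.inv).mul measurable_snd)).aemeasurable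
      _ = ∫⁻ y, ∫⁻ x, φ (y⁻¹ * x)⁻¹ ∂ν ∂ν := by
          simp
      _ = ∫⁻ x, φ x⁻¹ ∂ν := by
          have : ∀ y, ∫⁻ x, φ (y⁻¹ * x)⁻¹ ∂ν = ∫⁻ x, φ x⁻¹ ∂ν := fun y =>
            lintegral_mul_left_eq_self (fun x => φ x⁻¹) y⁻¹
          simp_rw [this]
          simp
  rw [← hinv]
  infer_instance

lemma og_norm {n : ℕ} (g : OG n) (x : Eucl n) :
    ‖Matrix.toEuclideanLin (g : Matrix (Fin n) (Fin n) ℝ) x‖ = ‖x‖ := by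
  have h1 : (g : Matrix (Fin n) (Fin n) ℝ).conjTranspose * (g : Matrix (Fin n) (Fin n) ℝ) = 1 :=
    Unitary.star_mul_self_of_mem g.2
  have h2 : inner ℝ (Matrix.toEuclideanLin (g : Matrix (Fin n) (Fin n) ℝ) x)
      (Matrix.toEuclideanLin (g : Matrix (Fin n) (Fin n) ℝ) x) = inner ℝ x x := by
    rw [← LinearMap.adjoint_inner_left, ← Matrix.toEuclideanLin_conjTranspose_eq_adjoint]
    congr 1
    have : WithLp.toLp 2 (((g : Matrix (Fin n) (Fin n) ℝ).conjTranspose).mulVec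
      ((g : Matrix (Fin n) (Fin n) ℝ).mulVec (WithLp.ofLp x))) = x := by
      rw [Matrix.mulVec_mulVec, h1, Matrix.one_mulVec]
    exact this
  rw [real_inner_self_eq_norm_sq, real_inner_self_eq_norm_sq] at h2
  exact (pow_left_inj₀ (norm_nonneg _) (norm_nonneg _) two_ne_zero).mp h2

/-- the isometry given by an orthogonal matrix -/
def ogL {n : ℕ} (g : OG n) : Eucl n →ₗᵢ[ℝ] Eucl n :=
  ⟨Matrix.toEuclideanLin (g : Matrix (Fin n) (Fin n) ℝ), og_norm g⟩

def ogE {n : ℕ} (g : OG n) : Eucl n ≃ₗᵢ[ℝ] Eucl n := (ogL g).toLinearIsometryEquiv rfl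

lemma ogL_apply {n : ℕ} (g : OG n) (x : Eucl n) :
    ogL g x = Matrix.toEuclideanLin (g : Matrix (Fin n) (Fin n) ℝ) x := rfl

lemma ogE_apply {n : ℕ} (g : OG n) (x : Eucl n) : ogE g x = ogL g x := rfl

lemma ogL_mul {n : ℕ} (g h : OG n) (x : Eucl n) : ogL (g * h) x = ogL g (ogL h x) := by
  have : WithLp.toLp 2 (((g : Matrix (Fin n) (Fin n) ℝ) * (h : Matrix (Fin n) (Fin n) ℝ)).mulVec
      (WithLp.ofLp x)) = WithLp.toLp 2 ((g : Matrix (Fin n) (Fin n) ℝ).mulVec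
      ((h : Matrix (Fin n) (Fin n) ℝ).mulVec (WithLp.ofLp x))) := by
    rw [Matrix.mulVec_mulVec]
  exact this

lemma og_exists {n : ℕ} (e : Eucl n ≃ₗᵢ[ℝ] Eucl n) : ∃ g : OG n, ∀ x, ogL g x = e x := by
  set M : Matrix (Fin n) (Fin n) ℝ := Matrix.toEuclideanLin.symm (e.toLinearEquiv : Eucl n →ₗ[ℝ] Eucl n)
    with hM
  have hM' : ∀ x, Matrix.toEuclideanLin M x = e x := by
    intro x; rw [hM, LinearEquiv.apply_symm_apply]; rfl
  have hmem : M ∈ Matrix.orthogonalGroup (Fin n) ℝ := by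
    rw [Matrix.mem_orthogonalGroup_iff']
    apply Matrix.toEuclideanLin.injective
    ext1 x
    refine ext_inner_right ℝ fun y => ?_
    have h1 : Matrix.toEuclideanLin (M.transpose * M) x =
        Matrix.toEuclideanLin M.conjTranspose (Matrix.toEuclideanLin M x) := by
      have : WithLp.toLp 2 ((M.transpose * M).mulVec (WithLp.ofLp x)) =
        WithLp.toLp 2 (M.conjTranspose.mulVec (M.mulVec (WithLp.ofLp x))) := by
        rw [Matrix.mulVec_mulVec, Matrix.conjTranspose_eq_transpose_of_trivial]
      exact this
    have h2 : Matrix.toEuclideanLin (1 : Matrix (Fin n) (Fin n) ℝ) x = x := by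
      have : WithLp.toLp 2 ((1 : Matrix (Fin n) (Fin n) ℝ).mulVec (WithLp.ofLp x)) = x := by
        rw [Matrix.one_mulVec]
      exact this
    rw [h1, h2, Matrix.toEuclideanLin_conjTranspose_eq_adjoint, LinearMap.adjoint_inner_left,
      hM', hM', LinearIsometryEquiv.inner_map_map]
  exact ⟨⟨M, hmem⟩, hM'⟩

lemma SM.comp_isom {n : ℕ} {c : ℝ} {F : Eucl n → ℝ≥0∞} (hF : SM c F) (L : Eucl n →ₗᵢ[ℝ] Eucl n) :
    SM c (fun x => F (L x)) := by
  intro ε hε x z hxz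
  have := hF ε hε (L x) (L z) (by rw [← map_sub, LinearIsometry.norm_map]; exact hxz)
  simpa using this

lemma lintegral_og {n : ℕ} (g : OG n) (F : Eucl n → ℝ≥0∞) : ∫⁻ x, F (ogL g x) = ∫⁻ x, F x :=
  (ogE g).measurePreserving.lintegral_comp_emb (ogE g).toHomeomorph.measurableEmbedding F

lemma projDir_last {k : ℕ} (G : Eucl (k + 1) → ℝ≥0∞) :
    projDir G (EuclideanSpace.single (Fin.last k) 1) = projLast G := by
  have : dirRefl (EuclideanSpace.single (Fin.last k) (1 : ℝ)) = 0 := by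
    simp [dirRefl]
  rw [projDir]
  congr 1
  ext x
  rw [refl_formula, this]
  simp

lemma PF_bound {n : ℕ} {F : Eucl n → ℝ≥0∞} {c : ℝ} (hc : 0 ≤ c) (hF : QC F) (hS : SM c F)
    (hI : ∫⁻ x, F x ≠ ∞) (d : ℕ) : ∀ (m : ℕ) (h : m ≤ n), m + d = n →
      ∫⁻ y, PF h F y ≤ ENNReal.ofReal (c + n) ^ d * ∫⁻ x, F x := by
  induction d with
  | zero =>
    intro m h hm
    obtain rfl : m = n := by omega
    simp [PF_self]
  | succ d ih =>
    intro m h hm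
    have h' : m + 1 ≤ n := by omega
    have h1 := ih (m + 1) h' (by omega)
    have hfin : ∫⁻ y, PF h' F y ≠ ∞ :=
      (h1.trans_lt (ENNReal.mul_lt_top (ENNReal.pow_lt_top ENNReal.ofReal_lt_top) hI.lt_top)).ne
    have h2 := core hc (PF_qc h' hF) (PF_sm h' hS) hfin {EuclideanSpace.single (Fin.last m) 1}
      (fun _ => 1) (fun _ => zero_le_one) 1 one_pos (by
        intro θ
        have := abs_real_inner_le_norm (EuclideanSpace.single (Fin.last m) (1 : ℝ)) θ
        simpa using this)
    rw [Finset.sum_singleton, projDir_last, ← PF_lintegral_last] at h2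
    have h3 : ∫⁻ y, PF h F y ≤ ENNReal.ofReal (c + n) * ∫⁻ y, PF h' F y := by
      calc ∫⁻ y, PF h F y ≤ ENNReal.ofReal (2 * 1 * ‖EuclideanSpace.single (Fin.last m) (1 : ℝ)‖) *
            ∫⁻ y, PF h F y := by
            apply le_mul_of_one_le_left (zero_le)
            rw [ENNReal.one_le_ofReal]; simp
        _ ≤ _ := h2
        _ ≤ _ := by
            gcongr
            rw [one_mul]
            gcongr
            exact_mod_cast h'
    refine h3.trans ?_
    rw [pow_succ', mul_assoc]
    gcongr

lemma PF_meas {n m : ℕ} (h : m ≤ n) {f : Eucl n → ℝ} (hf : UpperSemicontinuous f) :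
    Measurable (fun p : OG n × Eucl m => PF h (fun x => ENNReal.ofReal (f (ogL p.1 x))) p.2) := by
  apply measurable_of_Ioi
  intro t
  have hFu : UpperSemicontinuous (fun x => ENNReal.ofReal (f x)) :=
    ENNReal.continuous_ofReal.comp_upperSemicontinuous hf (fun a b hab => ENNReal.ofReal_le_ofReal hab)
  have hcont : ∀ R : ℕ, Continuous (fun q : (OG n × Eucl m) ×
      (Metric.closedBall (0 : (stdSubspace n m)ᗮ) R) =>
      ogL q.1.1 (iotaL h q.1.2 + ((q.2 : (stdSubspace n m)ᗮ) : Eucl n))) := by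
    intro R
    have h1 : Continuous (fun q : (OG n × Eucl m) × (Metric.closedBall (0 : (stdSubspace n m)ᗮ) R) =>
        iotaL h q.1.2 + ((q.2 : (stdSubspace n m)ᗮ) : Eucl n)) := by
      have := (iotaL h).continuous
      fun_prop
    have h2 : Continuous (fun q : (OG n × Eucl m) × (Metric.closedBall (0 : (stdSubspace n m)ᗮ) R) =>
        (q.1.1 : Matrix (Fin n) (Fin n) ℝ)) := by fun_prop
    have h3 : Continuous (fun q : (OG n × Eucl m) × (Metric.closedBall (0 : (stdSubspace n m)ᗮ) R) =>
        WithLp.toLp 2 ((q.1.1 : Matrix (Fin n) (Fin n) ℝ).mulVec (WithLp.ofLp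
          (iotaL h q.1.2 + ((q.2 : (stdSubspace n m)ᗮ) : Eucl n))))) := by
      refine (PiLp.continuous_toLp 2 _).comp ?_
      exact h2.matrix_mulVec ((PiLp.continuous_ofLp 2 _).comp h1)
    exact h3
  have heq : (fun p : OG n × Eucl m => PF h (fun x => ENNReal.ofReal (f (ogL p.1 x))) p.2) ⁻¹' Set.Ioi t
      = ⋃ (R : ℕ), ⋃ (q : ℚ), ⋃ (_ : t < (Real.toNNReal q : ℝ≥0∞)),
        Prod.fst '' ((fun q : (OG n × Eucl m) × (Metric.closedBall (0 : (stdSubspace n m)ᗮ) R) =>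
          ogL q.1.1 (iotaL h q.1.2 + ((q.2 : (stdSubspace n m)ᗮ) : Eucl n))) ⁻¹'
          ((fun x => ENNReal.ofReal (f x)) ⁻¹' Set.Ici (Real.toNNReal q : ℝ≥0∞))) := by
    ext p
    simp only [Set.mem_preimage, Set.mem_Ioi, Set.mem_iUnion, Set.mem_image, PF, lt_iSup_iff]
    constructor
    · rintro ⟨z, hz⟩
      obtain ⟨q, _, hq1, hq2⟩ := ENNReal.lt_iff_exists_rat_btwn.mp hz
      obtain ⟨R, hR⟩ := exists_nat_ge ‖z‖
      exact ⟨R, q, hq1, ⟨p, ⟨z, by simpa using hR⟩⟩, hq2.le, rfl⟩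
    · rintro ⟨R, q, hq, ⟨p', z⟩, hz, rfl⟩
      exact ⟨z, lt_of_lt_of_le hq hz⟩
  rw [heq]
  refine MeasurableSet.iUnion fun R => MeasurableSet.iUnion fun q => MeasurableSet.iUnion fun _ => ?_
  have : CompactSpace (Metric.closedBall (0 : (stdSubspace n m)ᗮ) (R : ℝ)) :=
    isCompact_iff_compactSpace.mp (isCompact_closedBall _ _)
  apply IsClosed.measurableSet
  apply isClosedMap_fst_of_compactSpace
  exact (hFu.isClosed_preimage _).preimage (hcont R)


/-- the integral of the projection of `f ∘ g` -/
def LA {m n : ℕ} (h : m ≤ n) (f : Eucl n → ℝ) (g : OG n) : ℝ≥0∞ :=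
  ∫⁻ y, PF h (fun x => ENNReal.ofReal (f (ogL g x))) y

lemma LA_measurable {m n : ℕ} (h : m ≤ n) {f : Eucl n → ℝ} (hf : MemQ0 f) : Measurable (LA h f) :=
  (PF_meas h hf.2.2.1).lintegral_prod_right

lemma real_eq_LA {m n : ℕ} (h : m ≤ n) {f : Eucl n → ℝ} (hf : MemQ0 f) (g : OG n) :
    (∫ y : stdSubspace n m, ⨆ z : (stdSubspace n m)ᗮ,
        f ((Matrix.toEuclideanLin (g : Matrix (Fin n) (Fin n) ℝ))
            ((y : Eucl n) + (z : Eucl n)))) = (LA h f g).toReal := by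
  have hq : QC (fun x => ENNReal.ofReal (f (ogL g x))) := hf.qc.comp (ogL g).toLinearMap
  have hq2 : QC (fun y : stdSubspace n m => ⨆ z : (stdSubspace n m)ᗮ,
      ENNReal.ofReal (f (ogL g ((y : Eucl n) + (z : Eucl n))))) := by
    have := hq.iSup (Submodule.subtype (stdSubspace n m)) (Submodule.subtype (stdSubspace n m)ᗮ)
      Set.univ convex_univ
    convert this using 2 with y
    simp
  have h1 : ∀ y : stdSubspace n m, (⨆ z : (stdSubspace n m)ᗮ,
        f ((Matrix.toEuclideanLin (g : Matrix (Fin n) (Fin n) ℝ)) ((y : Eucl n) + (z : Eucl n)))) =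
      (⨆ z : (stdSubspace n m)ᗮ, ENNReal.ofReal (f (ogL g ((y : Eucl n) + (z : Eucl n))))).toReal := by
    intro y
    rw [ENNReal.toReal_iSup (fun _ => ENNReal.ofReal_ne_top)]
    refine iSup_congr fun z => ?_
    rw [ENNReal.toReal_ofReal (hf.1 _)]
    rfl
  simp_rw [h1]
  rw [integral_toReal (hq2.aemeasurable volume)]
  · rw [lintegral_std h]
    rfl
  · refine Filter.Eventually.of_forall fun y => ?_
    refine lt_of_le_of_lt (iSup_le fun z => ENNReal.ofReal_le_ofReal (hf.le_sup _))
      ENNReal.ofReal_lt_top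

lemma LA_ne_top {m n : ℕ} (h : m ≤ n) {f : Eucl n → ℝ} (hf : MemQ0 f)
    (hS : SM (n : ℝ) (fun x => ENNReal.ofReal (f x))) :
    ∃ C : ℝ≥0∞, C ≠ ∞ ∧ ∀ g, LA h f g ≤ C := by
  have hI : ∫⁻ x, ENNReal.ofReal (f x) ≠ ∞ := hf.2.2.2.1.lintegral_lt_top.ne
  refine ⟨ENNReal.ofReal ((n : ℝ) + n) ^ (n - m) * ∫⁻ x, ENNReal.ofReal (f x),
    ENNReal.mul_ne_top (ENNReal.pow_ne_top ENNReal.ofReal_ne_top) hI, fun g => ?_⟩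
  have hg := lintegral_og g (fun x => ENNReal.ofReal (f x))
  have := PF_bound (Nat.cast_nonneg n) (hf.qc.comp (ogL g).toLinearMap) (hS.comp_isom (ogL g))
    (by rw [← hg] at hI; exact hI) (n - m) m h (by omega)
  rw [← hg]
  exact this

lemma LA_ineq {k n : ℕ} (h : k + 1 ≤ n) {f : Eucl n → ℝ} (hf : MemQ0 f)
    (hS : SM (n : ℝ) (fun x => ENNReal.ofReal (f x)))
    (ν : Measure (OG n)) [IsProbabilityMeasure ν] [ν.IsMulLeftInvariant]
    (T : Finset (Eucl (k + 1))) (w : Eucl (k + 1) → ℝ) (hw : ∀ v, 0 ≤ w v) (ρ : ℝ) (hρ : 0 < ρ)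
    (hT : ∀ θ : Eucl (k + 1), ∑ v ∈ T, w v * |inner ℝ v θ| ≤ ρ * ‖θ‖) :
    ENNReal.ofReal (2 * ∑ v ∈ T, w v * ‖v‖) * ∫⁻ g, LA (Nat.le_of_succ_le h) f g ∂ν ≤
      ENNReal.ofReal (ρ * (n + (k + 1))) * ∫⁻ g, LA h f g ∂ν := by
  have := og_right_inv ν
  choose R hR using fun v : Eucl (k + 1) =>
    og_exists (Submodule.reflection (ℝ ∙ (iotaL h (dirRefl v)))ᗮ)
  have hpt : ∀ g, ∑ v ∈ T, ENNReal.ofReal (2 * w v * ‖v‖) * LA (Nat.le_of_succ_le h) f (g * R v) ≤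
      ENNReal.ofReal (ρ * (n + (k + 1))) * LA h f g := by
    intro g
    obtain ⟨C, hC, hCg⟩ := LA_ne_top h hf hS
    have h1 := core (Nat.cast_nonneg n) (PF_qc h (hf.qc.comp (ogL g).toLinearMap))
      (PF_sm h (hS.comp_isom (ogL g))) (ne_top_of_le_ne_top hC (hCg g)) T w hw ρ hρ hT
    refine le_trans (le_of_eq ?_) h1
    refine Finset.sum_congr rfl fun v _ => ?_
    congr 1
    have h2 := PF_projDir h (fun x => ENNReal.ofReal (f (ogL g x))) v
    refine Eq.trans ?_ h2
    unfold LA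
    refine lintegral_congr fun y => ?_
    congr 1
    ext x
    rw [ogL_mul, hR v]
  have hm := LA_measurable (Nat.le_of_succ_le h) hf
  have hIntg := lintegral_mono (μ := ν) hpt
  rw [lintegral_const_mul _ (LA_measurable h hf), lintegral_finsetSum] at hIntg
  · refine le_trans (le_of_eq ?_) hIntg
    rw [Finset.mul_sum, ENNReal.ofReal_sum_of_nonneg (fun v _ => by have := hw v; positivity),
      Finset.sum_mul]
    refine Finset.sum_congr rfl fun v _ => ?_
    have hmv : Measurable (fun g => LA (Nat.le_of_succ_le h) f (g * R v)) :=
      hm.comp (measurable_mul_const (R v))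
    rw [lintegral_const_mul _ hmv,
      lintegral_mul_right_eq_self (LA (Nat.le_of_succ_le h) f) (R v), mul_assoc]
  · intro v _
    exact (hm.comp (measurable_mul_const (R v))).const_mul _

lemma LA_main {k n : ℕ} (h : k + 1 ≤ n) {f : Eucl n → ℝ} (hf : MemQ0 f)
    (hS : SM (n : ℝ) (fun x => ENNReal.ofReal (f x)))
    (ν : Measure (OG n)) [IsProbabilityMeasure ν] [ν.IsMulLeftInvariant] :
    ((k : ℝ) + 1) * ballVol (k + 1) * (∫⁻ g, LA (Nat.le_of_succ_le h) f g ∂ν).toReal ≤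
      ballVol k * (n + (k + 1)) * (∫⁻ g, LA h f g ∂ν).toReal := by
  set a := (∫⁻ g, LA (Nat.le_of_succ_le h) f g ∂ν).toReal with ha
  set b := (∫⁻ g, LA h f g ∂ν).toReal with hb
  have ha0 : 0 ≤ a := ENNReal.toReal_nonneg
  have hb0 : 0 ≤ b := ENNReal.toReal_nonneg
  have hbt : ∫⁻ g, LA h f g ∂ν ≠ ∞ := by
    obtain ⟨C, hC, hCg⟩ := LA_ne_top h hf hS
    have := lintegral_mono (μ := ν) hCg
    rw [lintegral_const, measure_univ, mul_one] at this
    exact ne_top_of_le_ne_top hC this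
  have hΓ : 0 < Real.Gamma ((k : ℝ) / 2 + 1) := Real.Gamma_pos_of_pos (by positivity)
  set Γ := Real.Gamma ((k : ℝ) / 2 + 1) with hΓd
  have hk1 : √Real.pi ^ k = ballVol k * Γ := by
    rw [ballVol_eq, ← hΓd, div_mul_cancel₀ _ hΓ.ne']
  have key : ∀ η : ℝ, 0 < η →
      2 * ((k + 1) * ballVol (k + 1) * (Γ / 2) - η) * a ≤ (ballVol k * Γ + η) * (n + (k + 1)) * b := by
    intro η hη
    obtain ⟨T, w, hw, hT, hs⟩ := exists_directions k η hη
    have h1 := LA_ineq h hf hS ν T w hw (√Real.pi ^ k + η) (by positivity) hT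
    have h2 := ENNReal.toReal_mono (ENNReal.mul_ne_top ENNReal.ofReal_ne_top hbt) h1
    have hsn : 0 ≤ ∑ v ∈ T, w v * ‖v‖ := Finset.sum_nonneg fun v _ => by have := hw v; positivity
    rw [ENNReal.toReal_mul, ENNReal.toReal_mul, ENNReal.toReal_ofReal (by positivity),
      ENNReal.toReal_ofReal (by positivity), hk1] at h2
    refine le_trans ?_ h2
    gcongr
  have hlim : ((k : ℝ) + 1) * ballVol (k + 1) * Γ * a ≤ ballVol k * Γ * (n + (k + 1)) * b := by
    refine le_of_forall_pos_le_add fun ε hε => ?_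
    set D : ℝ := 2 * a + (n + (k + 1)) * b + 1 with hD
    have hDp : 0 < D := by positivity
    have h1 := key (ε / D) (by positivity)
    have h2 : ε / D * (2 * a + (n + (k + 1)) * b) ≤ ε := by
      rw [div_mul_eq_mul_div, div_le_iff₀ hDp]
      nlinarith
    nlinarith
  have h3 : (((k : ℝ) + 1) * ballVol (k + 1) * a) * Γ ≤ (ballVol k * (n + (k + 1)) * b) * Γ := by
    linarith
  exact le_of_mul_le_mul_right h3 hΓ

lemma sup_le_LA {n : ℕ} {f : Eucl n → ℝ} (hf : MemQ0 f) (g : OG n) :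
    ENNReal.ofReal (supNorm f) ≤ LA (Nat.zero_le n) f g := by
  have hv : (volume : Measure (Eucl 0)) Set.univ = 1 := by
    have h1 : ballVol 0 = 1 := by rw [ballVol_eq]; simp
    have h2 : Metric.closedBall (0 : Eucl 0) 1 = Set.univ := by
      ext x; simp [Subsingleton.elim x 0]
    rw [ballVol, h2] at h1
    rwa [ENNReal.toReal_eq_one_iff] at h1
  have h3 : LA (Nat.zero_le n) f g = PF (Nat.zero_le n) (fun x => ENNReal.ofReal (f (ogL g x))) 0 := by
    unfold LA
    rw [lintegral_congr (g := fun _ => PF (Nat.zero_le n) (fun x => ENNReal.ofReal (f (ogL g x))) 0)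
      (fun y => by rw [Subsingleton.elim y 0]), lintegral_const, hv, mul_one]
  rw [h3]
  have h4 : ∀ x, ENNReal.ofReal (f x) ≤ PF (Nat.zero_le n) (fun x => ENNReal.ofReal (f (ogL g x))) 0 := by
    intro x
    refine le_iSup_of_le ⟨(ogE g).symm x, (mem_std_orth _).mpr (by simp)⟩ (le_of_eq ?_)
    simp only [map_zero, zero_add]
    rw [← ogE_apply, LinearIsometryEquiv.apply_symm_apply]
  by_cases ht : PF (Nat.zero_le n) (fun x => ENNReal.ofReal (f (ogL g x))) 0 = ∞
  · rw [ht]; exact le_top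
  · refine ENNReal.ofReal_le_of_le_toReal ?_
    exact ciSup_le fun x => (ENNReal.ofReal_le_iff_le_toReal ht).mp (h4 x)

lemma querm_eq {n m j : ℕ} (h : m ≤ n) (hj : n - j = m) (hjn : j ≠ n) {f : Eucl n → ℝ} (hf : MemQ0 f)
    (hS : SM (n : ℝ) (fun x => ENNReal.ofReal (f x)))
    (ν : Measure (OG n)) [IsProbabilityMeasure ν] :
    querm ν f j = ballVol n / ballVol m * (∫⁻ g, LA h f g ∂ν).toReal := by
  subst hj
  obtain ⟨C, hC, hCg⟩ := LA_ne_top h hf hS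
  rw [querm, if_neg hjn]
  simp_rw [real_eq_LA h hf]
  rw [integral_toReal (LA_measurable h hf).aemeasurable
    (Filter.Eventually.of_forall fun g => lt_of_le_of_lt (hCg g) hC.lt_top)]

lemma querm_le {n k : ℕ} (h : k + 1 ≤ n) {f : Eucl n → ℝ} (hf : MemQ0 f)
    (hS : SM (n : ℝ) (fun x => ENNReal.ofReal (f x)))
    (ν : Measure (OG n)) [IsProbabilityMeasure ν] :
    querm ν f (n - k) ≤ ballVol n / ballVol k *
      (∫⁻ g, LA (Nat.le_of_succ_le h) f g ∂ν).toReal := by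
  rcases Nat.eq_zero_or_pos k with rfl | hk
  · have h1 : ballVol 0 = 1 := by rw [ballVol_eq]; simp
    rw [querm, if_pos (by simp), h1, div_one]
    have := ballVol_pos n
    gcongr
    obtain ⟨C, hC, hCg⟩ := LA_ne_top (Nat.le_of_succ_le h) hf hS
    have h2 := lintegral_mono (μ := ν) hCg
    rw [lintegral_const, measure_univ, mul_one] at h2
    rw [← ENNReal.ofReal_le_iff_le_toReal (ne_top_of_le_ne_top hC h2)]
    have h3 := lintegral_mono (μ := ν) (sup_le_LA hf)
    rwa [lintegral_const, measure_univ, mul_one] at h3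
  · rw [querm_eq (Nat.le_of_succ_le h) (by omega) (by omega) hf hS ν]


end

/-- **Monotonicity of quermassintegrals in John's position** (Lemma 4.1):
if `f ∈ Q₀ⁿ` dominates `a·‖f‖_∞·1_{B₂ⁿ}` for some `a ∈ [e^{−n}, 1]`
(e.g. `f` in John's position), then
`W_{n−k}(f) ≤ W_{n−k−1}(f) · (n+k+1)/(k+1)` for `0 ≤ k ≤ n−1`. -/
theorem querm_monotone_of_john_position (n k : ℕ) (hn : 1 ≤ n) (hk : k ≤ n - 1)
    (f : Eucl n → ℝ) (hf : MemQ0 f)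
    (hJohn : ∃ a : ℝ, a ∈ Set.Icc (Real.exp (-(n : ℝ))) 1 ∧
      ∀ x : Eucl n,
        a * supNorm f * (Metric.closedBall (0 : Eucl n) 1).indicator
          (fun _ => (1 : ℝ)) x ≤ f x)
    (ν : Measure (OG n)) [IsProbabilityMeasure ν] [ν.IsMulLeftInvariant] :
    querm ν f (n - k) ≤ querm ν f (n - k - 1) * (((n : ℝ) + k + 1) / (k + 1)) := by
  have h : k + 1 ≤ n := by omega
  have hS : SM (n : ℝ) (fun x => ENNReal.ofReal (f x)) := by
    apply hf.sm
    intro b hb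
    obtain ⟨a, ha, hab⟩ := hJohn
    have h1 := hab b
    rw [Set.indicator_of_mem (by simpa using hb), mul_one] at h1
    refine le_trans ?_ h1
    have := hf.sup_pos
    gcongr
    exact ha.1
  refine (querm_le h hf hS ν).trans ?_
  rw [querm_eq (j := n - k - 1) h (by omega) (by omega) hf hS ν]
  have h1 := LA_main h hf hS ν
  have p0 := ballVol_pos n
  have p1 := ballVol_pos k
  have p2 := ballVol_pos (k + 1)
  set A := (∫⁻ g, LA (Nat.le_of_succ_le h) f g ∂ν).toReal
  set B := (∫⁻ g, LA h f g ∂ν).toReal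
  have h2 : A ≤ ballVol k * (n + (k + 1)) * B / (((k : ℝ) + 1) * ballVol (k + 1)) := by
    rw [le_div_iff₀ (by positivity)]; linarith
  calc ballVol n / ballVol k * A ≤ ballVol n / ballVol k *
        (ballVol k * (n + (k + 1)) * B / (((k : ℝ) + 1) * ballVol (k + 1))) := by gcongr
    _ = _ := by field_simp; ring
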